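/- Let S = {S_1,…,S_K} be an arbitrary finite set of complex d×d matrices. Then there exists at least one θ-ergodic Borel probability measure μ_* on Σ_K^+ which is extremal for S, i.e., such that ρ(S) = lim_{n→∞} ‖S_{i_1}⋯S_{i_n}‖^{1/n} for μ_*-a.e. i ∈ Σ_K^+. -/

import Mathlib

open Filter MeasureTheory Topology
open scoped ENNReal

noncomputable section

/-- The one-sided shift on `Σ_K^+ = ℕ → Fin K`. -/
def shift (K : ℕ) : (ℕ → Fin K) → ℕ → Fin K := fun i n => i (n + 1)

/-- The ordered product `S_{w 0} ⋯ S_{w (n-1)}` along a finite word `w`. -/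
def finWordProd {d K : ℕ} (S : Fin K → Matrix (Fin d) (Fin d) ℂ) {n : ℕ}
    (w : Fin n → Fin K) : Matrix (Fin d) (Fin d) ℂ :=
  (List.ofFn fun t => S (w t)).prod

/-- The ordered product of the first `n` matrices along an infinite sequence. -/
def wordProd {d K : ℕ} (S : Fin K → Matrix (Fin d) (Fin d) ℂ)
    (i : ℕ → Fin K) (n : ℕ) : Matrix (Fin d) (Fin d) ℂ :=
  (List.ofFn fun t : Fin n => S (i t)).prod

/-- The (usual) spectral radius of a complex matrix, as a real number. -/
def specRad {d : ℕ} (A : Matrix (Fin d) (Fin d) ℂ) : ℝ :=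
  (spectralRadius ℂ A).toReal

/-- The generalized spectral radius of a finite family of matrices. -/
def genSpecRad {d K : ℕ} (S : Fin K → Matrix (Fin d) (Fin d) ℂ) : ℝ :=
  Filter.atTop.limsup fun n : ℕ =>
    ⨆ w : Fin n → Fin K, specRad (finWordProd S w) ^ ((n : ℝ)⁻¹)

/-- A submultiplicative matrix norm on `d × d` complex matrices. -/
structure MatrixNorm (d : ℕ) where
  N : Matrix (Fin d) (Fin d) ℂ → ℝ
  nonneg : ∀ A, 0 ≤ N A
  definite : ∀ A, N A = 0 ↔ A = 0
  homog : ∀ (c : ℂ) (A), N (c • A) = ‖c‖ * N A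
  triangle : ∀ A B, N (A + B) ≤ N A + N B
  submult : ∀ A B, N (A * B) ≤ N A * N B

/-- `μ` is extremal for `S` (w.r.t. the matrix norm `N`). -/
def IsExtremal {d K : ℕ} (S : Fin K → Matrix (Fin d) (Fin d) ℂ)
    (N : Matrix (Fin d) (Fin d) ℂ → ℝ) (μ : Measure (ℕ → Fin K)) : Prop :=
  ∀ᵐ i ∂μ, Tendsto (fun n : ℕ => N (wordProd S i n) ^ ((n : ℝ)⁻¹))
    atTop (𝓝 (genSpecRad S))

/-- `x` is a density point of `μ`. -/
def DensityPoint {K : ℕ} (μ : Measure (ℕ → Fin K)) (x : ℕ → Fin K) : Prop :=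
  ∀ U : Set (ℕ → Fin K), IsOpen U → x ∈ U → 0 < μ U

/-- `S` has the spectral finiteness property. -/
def HasFinitenessProperty {d K : ℕ} (S : Fin K → Matrix (Fin d) (Fin d) ℂ) : Prop :=
  ∃ n : ℕ, 1 ≤ n ∧ ∃ w : Fin n → Fin K,
    genSpecRad S = specRad (finWordProd S w) ^ ((n : ℝ)⁻¹)

/-- `x` is periodic of period `π ≥ 1`. -/
def IsPeriodic {K : ℕ} (x : ℕ → Fin K) (π : ℕ) : Prop :=
  1 ≤ π ∧ ∀ n, x (n + π) = x n


/-!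
Let `ρ` be the joint spectral radius of the family, the exponential growth rate of its products in
norm. It is enough to find a sequence all of whose factors `w` satisfy `‖T_w‖ ≥ c ρ ^ |w|` for some
`c > 0`: these sequences form a closed shift-invariant set, which carries an ergodic measure by the
theorems of Krylov–Bogoliubov and Krein–Milman. That `ρ` is also the generalized spectral radius is
the theorem of Berger and Wang, which comes out of the same argument.

Normalize to `ρ = 1` and suppose first that all products are bounded. A word whose product has norm
at least `1` has all its factors bounded below, and a compactness argument yields the sequence. Its
prefix products have a limit point `P ≠ 0`, and `P Q = P` for a limit point `Q` of products along
longer and longer factors. So `1` is an eigenvalue of `Q`, and by continuity of the spectrum these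
products have a spectral radius close to `1`.

In general, the vectors with bounded orbit form a nonzero invariant subspace, on which the products
are bounded by the uniform boundedness principle. In a complementary splitting the family is block
triangular and its growth rate is the larger of those of the diagonal blocks. Either the first block
has growth rate `1` and is covered by the bounded case, or the second one has, and it acts on a
space of smaller dimension.
-/

section InvariantMeasures

variable {Y : Type*} [MeasurableSpace Y]

/-- The uniform probability measure `(n + 1)⁻¹ ∑_{k ≤ n} δ_{f^k x}` on the orbit segment
`x, f x, …, f^n x`, whose limit points are the invariant measures of Krylov and Bogoliubov. The
shift of `n` by one keeps the segment nonempty. -/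
def empiricalMeasure (f : Y → Y) (x : Y) (n : ℕ) : ProbabilityMeasure Y where
  val := ((n + 1 : ℕ) : ℝ≥0∞)⁻¹ • ∑ k ∈ Finset.range (n + 1), Measure.dirac (f^[k] x)
  property := ⟨by
    simpa using ENNReal.inv_mul_cancel (a := (n + 1 : ℝ≥0∞)) (by simp) (by finiteness)⟩

variable [TopologicalSpace Y] [BorelSpace Y]

open scoped BoundedContinuousFunction

theorem integral_empiricalMeasure (f : Y → Y) (x : Y) (n : ℕ) (g : Y →ᵇ ℝ) :
    ∫ y, g y ∂(empiricalMeasure f x n : Measure Y) = birkhoffAverage ℝ f g (n + 1) x := by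
  simp only [empiricalMeasure, ProbabilityMeasure.coe_mk, integral_smul_measure,
    ENNReal.toReal_inv, ENNReal.toReal_natCast, birkhoffAverage, birkhoffSum]
  rw [integral_finsetSum_measure fun k _ => g.integrable _]
  simp only [integral_dirac' _ _ g.continuous.stronglyMeasurable]

theorem measurePreserving_of_tendsto_empiricalMeasure [HasOuterApproxClosed Y]
    {f : Y → Y} (hf : Continuous f) {x : Y} {F : Filter ℕ} [F.NeBot] (hF : F ≤ atTop)
    {μ : ProbabilityMeasure Y} (hμ : Tendsto (empiricalMeasure f x) F (𝓝 μ)) :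
    MeasurePreserving f (μ : Measure Y) μ := by
  refine ⟨hf.measurable, ?_⟩
  have := Measure.isProbabilityMeasure_map (μ := (μ : Measure Y)) hf.measurable.aemeasurable
  refine ext_of_forall_integral_eq_of_IsFiniteMeasure fun g => ?_
  rw [integral_map hf.measurable.aemeasurable g.continuous.aestronglyMeasurable]
  have hlim := ProbabilityMeasure.tendsto_iff_forall_integral_tendsto.1 hμ
  have hdiff := (hlim (g.compContinuous ⟨f, hf⟩)).sub (hlim g)
  have hzero : Tendsto (fun n => birkhoffAverage ℝ f g (n + 1) (f x)
      - birkhoffAverage ℝ f g (n + 1) x) F (𝓝 0) :=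
    ((tendsto_birkhoffAverage_apply_sub_birkhoffAverage ℝ
      (g.isBounded_range.subset (Set.range_comp_subset_range _ g))).comp
        (tendsto_add_atTop_nat 1)).mono_left hF
  refine sub_eq_zero.1 (tendsto_nhds_unique (hdiff.congr fun n => ?_) hzero)
  rw [integral_empiricalMeasure, integral_empiricalMeasure]
  simp only [birkhoffAverage, birkhoffSum, BoundedContinuousFunction.compContinuous_apply,
    ContinuousMap.coe_mk, ← Function.iterate_succ_apply, Function.iterate_succ_apply']

theorem exists_probabilityMeasure_measurePreserving [CompactSpace Y] [T2Space Y]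
    [HasOuterApproxClosed Y] [Nonempty Y] {f : Y → Y} (hf : Continuous f) :
    ∃ μ : ProbabilityMeasure Y, MeasurePreserving f (μ : Measure Y) μ := by
  obtain ⟨x⟩ := ‹Nonempty Y›
  let F : Ultrafilter ℕ := Ultrafilter.of atTop
  exact ⟨_, measurePreserving_of_tendsto_empiricalMeasure (x := x) hf (Ultrafilter.of_le _)
    (F.map (empiricalMeasure f x)).le_nhds_lim⟩

theorem isClosed_setOf_measurePreserving [HasOuterApproxClosed Y]
    {f : Y → Y} (hf : Continuous f) :
    IsClosed {μ : ProbabilityMeasure Y | MeasurePreserving f (μ : Measure Y) μ} := by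
  have : {μ : ProbabilityMeasure Y | MeasurePreserving f (μ : Measure Y) μ}
      = {μ | μ.map hf.measurable.aemeasurable = μ} :=
    Set.ext fun μ => ⟨fun h => Subtype.ext h.map_eq, fun h =>
      ⟨hf.measurable, congrArg Subtype.val h⟩⟩
  rw [this]
  exact isClosed_eq (ProbabilityMeasure.continuous_map hf) continuous_id

/-- A probability measure viewed as the family of its integrals against continuous functions. This
embeds the probability measures in a locally convex space, where extreme points exist by the
Krein–Milman theorem. -/
def integralFamily (μ : ProbabilityMeasure Y) (g : C(Y, ℝ)) : ℝ := ∫ y, g y ∂(μ : Measure Y)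

theorem continuous_integralFamily [CompactSpace Y] :
    Continuous (integralFamily : ProbabilityMeasure Y → C(Y, ℝ) → ℝ) :=
  continuous_pi ProbabilityMeasure.continuous_integral_continuousMap

theorem integralFamily_injective [HasOuterApproxClosed Y] :
    Function.Injective (integralFamily : ProbabilityMeasure Y → C(Y, ℝ) → ℝ) := by
  intro μ ν h
  have hμν : (μ : Measure Y) = ν :=
    ext_of_forall_integral_eq_of_IsFiniteMeasure fun g => congrFun h g.toContinuousMap
  exact Subtype.ext hμν

theorem integralFamily_mem_openSegment [CompactSpace Y] {μ ν₁ ν₂ : ProbabilityMeasure Y}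
    (h : (μ : Measure Y) ∈ openSegment ℝ≥0∞ (ν₁ : Measure Y) ν₂) :
    integralFamily μ ∈ openSegment ℝ (integralFamily ν₁) (integralFamily ν₂) := by
  obtain ⟨a, b, ha, hb, hab, hμ⟩ := h
  have ha' : a ≠ ∞ := ne_top_of_le_ne_top ENNReal.one_ne_top (hab ▸ le_self_add)
  have hb' : b ≠ ∞ := ne_top_of_le_ne_top ENNReal.one_ne_top (hab ▸ le_add_self)
  refine ⟨a.toReal, b.toReal, ENNReal.toReal_pos ha.ne' ha', ENNReal.toReal_pos hb.ne' hb',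
    by rw [← ENNReal.toReal_add ha' hb', hab, ENNReal.toReal_one], funext fun g => ?_⟩
  have hg (ν : ProbabilityMeasure Y) : Integrable g (ν : Measure Y) :=
    (BoundedContinuousFunction.mkOfCompact g).integrable (ν : Measure Y)
  simp only [integralFamily, Pi.add_apply, Pi.smul_apply, ← hμ]
  rw [integral_add_measure ((hg ν₁).smul_measure ha') ((hg ν₂).smul_measure hb'),
    integral_smul_measure, integral_smul_measure]

theorem exists_ergodic_of_continuous [CompactSpace Y] [T2Space Y]
    [HasOuterApproxClosed Y] [Nonempty Y] {f : Y → Y} (hf : Continuous f) :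
    ∃ μ : Measure Y, IsProbabilityMeasure μ ∧ Ergodic f μ := by
  obtain ⟨_, ⟨μ, hμ, rfl⟩, hext⟩ := ((isClosed_setOf_measurePreserving hf).isCompact.image
    continuous_integralFamily).extremePoints_nonempty
    (Set.Nonempty.image integralFamily (exists_probabilityMeasure_measurePreserving hf))
  refine ⟨μ, inferInstance, Ergodic.of_mem_extremePoints
    (mem_extremePoints_iff_left.2 ⟨⟨hμ, inferInstance⟩, ?_⟩)⟩
  rintro ν₁ ⟨hν₁, _⟩ ν₂ ⟨hν₂, _⟩ hseg
  let μ₁ : ProbabilityMeasure Y := ⟨ν₁, ‹_›⟩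
  let μ₂ : ProbabilityMeasure Y := ⟨ν₂, ‹_›⟩
  have heq : integralFamily μ₁ = integralFamily μ :=
    hext ⟨μ₁, hν₁, rfl⟩ ⟨μ₂, hν₂, rfl⟩ (integralFamily_mem_openSegment hseg)
  exact congrArg Subtype.val (integralFamily_injective heq)

theorem exists_ergodic_of_isCompact_of_mapsTo [TopologicalSpace.MetrizableSpace Y]
    {f : Y → Y} (hf : Continuous f) {X : Set Y} (hX : IsCompact X) (hne : X.Nonempty)
    (hfX : Set.MapsTo f X X) :
    ∃ μ : Measure Y, IsProbabilityMeasure μ ∧ Ergodic f μ ∧ ∀ᵐ y ∂μ, y ∈ X := by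
  have := isCompact_iff_compactSpace.1 hX
  have := hne.to_subtype
  obtain ⟨μ, _, hμ⟩ := exists_ergodic_of_continuous (hf.restrict hfX)
  have hval : Measurable (Subtype.val : X → Y) := measurable_subtype_coe
  exact ⟨μ.map Subtype.val, Measure.isProbabilityMeasure_map hval.aemeasurable,
    (hval.measurePreserving μ).ergodic_of_ergodic_semiconj hμ hf.measurable fun _ => rfl,
    (ae_map_iff hval.aemeasurable hX.measurableSet).2 (ae_of_all _ Subtype.property)⟩

end InvariantMeasures

section JointSpectralRadius

variable {ι A B : Type*} [NormedRing A] [NormedRing B] {T : ι → A} {R : ι → B} {r r' : ℝ}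

/-- The products of the family `T` along words grow at most like `r ^ n` in the length `n`. -/
def GrowthLE (T : ι → A) (r : ℝ) : Prop :=
  ∃ C, ∀ w : List ι, ‖(w.map T).prod‖ ≤ C * r ^ w.length

theorem GrowthLE.exists_pos (h : GrowthLE T r) (hr : 0 ≤ r) :
    ∃ C > 0, ∀ w : List ι, ‖(w.map T).prod‖ ≤ C * r ^ w.length := by
  obtain ⟨C, hC⟩ := h
  refine ⟨max C 1, by positivity, fun w => (hC w).trans ?_⟩
  gcongr
  exact le_max_left C 1

theorem GrowthLE.mono (h : GrowthLE T r) (hr : 0 ≤ r) (hrr' : r ≤ r') : GrowthLE T r' := by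
  obtain ⟨C, hC0, hC⟩ := h.exists_pos hr
  exact ⟨C, fun w => (hC w).trans (by gcongr)⟩

theorem GrowthLE.of_norm_prod_le {D : ℝ} (hD : 0 ≤ D) (h : GrowthLE T r)
    (hRT : ∀ w : List ι, ‖(w.map R).prod‖ ≤ D * ‖(w.map T).prod‖) : GrowthLE R r := by
  obtain ⟨C, hC⟩ := h
  refine ⟨D * C, fun w => (hRT w).trans ?_⟩
  rw [mul_assoc]
  gcongr
  exact hC w

theorem GrowthLE.of_forall_length_eq [Finite ι] {n : ℕ} (hn : n ≠ 0) {s : ℝ} (hs : 0 < s)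
    (h : ∀ w : List ι, w.length = n → ‖(w.map T).prod‖ ≤ s ^ n) : GrowthLE T s := by
  obtain ⟨C, hC⟩ := ((List.finite_length_le ι n).image
    fun w => ‖(w.map T).prod‖ / s ^ w.length).bddAbove
  refine ⟨C, fun w => ?_⟩
  induction hl : w.length using Nat.strong_induction_on generalizing w with
  | _ l ih =>
  subst hl
  by_cases hw : w.length ≤ n
  · exact (div_le_iff₀ (by positivity)).1 (hC ⟨w, hw, rfl⟩)
  · have htake := h (w.take n) (by simp; omega)
    have hdrop := ih (w.length - n) (by omega) (w.drop n) (by simp)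
    calc ‖(w.map T).prod‖
        = ‖((w.take n).map T).prod * ((w.drop n).map T).prod‖ := by
          rw [← List.prod_append, ← List.map_append, List.take_append_drop]
      _ ≤ s ^ n * (C * s ^ (w.length - n)) := norm_mul_le_of_le htake hdrop
      _ = C * s ^ w.length := by rw [mul_left_comm, ← pow_add, Nat.add_sub_cancel' (by omega)]

theorem exists_growthLE [Finite ι] (T : ι → A) : ∃ r, 0 ≤ r ∧ GrowthLE T r := by
  obtain ⟨M, hM⟩ := (Set.finite_range fun k => ‖T k‖).bddAbove
  refine ⟨max M 1, by positivity, .of_forall_length_eq one_ne_zero (by positivity) fun w hw => ?_⟩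
  obtain ⟨k, rfl⟩ := List.length_eq_one_iff.1 hw
  simpa using Or.inl (hM ⟨k, rfl⟩)

/-- The joint spectral radius `lim_n max_{|w| = n} ‖T_w‖ ^ (1 / n)` of the family `T`, encoded as
the infimum of the exponential rates that bound the growth of its products. -/
def jointSpectralRadius (T : ι → A) : ℝ := sInf {r | 0 ≤ r ∧ GrowthLE T r}

theorem jointSpectralRadius_nonneg (T : ι → A) : 0 ≤ jointSpectralRadius T :=
  Real.sInf_nonneg fun _ hr => hr.1

theorem GrowthLE.jointSpectralRadius_le (h : GrowthLE T r) (hr : 0 ≤ r) :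
    jointSpectralRadius T ≤ r :=
  csInf_le ⟨0, fun _ hr => hr.1⟩ ⟨hr, h⟩

theorem jointSpectralRadius_le_of_forall_growthLE (hr : 0 ≤ r)
    (h : ∀ s > r, GrowthLE T s) : jointSpectralRadius T ≤ r :=
  le_of_forall_gt_imp_ge_of_dense fun s hs => (h s hs).jointSpectralRadius_le (hr.trans hs.le)

theorem GrowthLE.of_jointSpectralRadius_lt [Finite ι] (h : jointSpectralRadius T < r) :
    GrowthLE T r := by
  obtain ⟨s, ⟨hs, hTs⟩, hsr⟩ := exists_lt_of_csInf_lt (exists_growthLE T) h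
  exact hTs.mono hs hsr.le

theorem jointSpectralRadius_le_of_norm_prod_le [Finite ι] {D : ℝ} (hD : 0 ≤ D)
    (hRT : ∀ w : List ι, ‖(w.map R).prod‖ ≤ D * ‖(w.map T).prod‖) :
    jointSpectralRadius R ≤ jointSpectralRadius T :=
  jointSpectralRadius_le_of_forall_growthLE (jointSpectralRadius_nonneg T) fun _ hs =>
    (GrowthLE.of_jointSpectralRadius_lt hs).of_norm_prod_le hD hRT

theorem exists_jointSpectralRadius_pow_le_norm_prod [Finite ι] [Nonempty ι] (T : ι → A) {n : ℕ}
    (hn : n ≠ 0) : ∃ w : List ι, w.length = n ∧ jointSpectralRadius T ^ n ≤ ‖(w.map T).prod‖ := by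
  obtain ⟨k⟩ := ‹Nonempty ι›
  obtain ⟨w, hw, hmax⟩ := Set.exists_max_image _ (fun w => ‖(w.map T).prod‖)
    (List.finite_length_eq ι n) ⟨List.replicate n k, List.length_replicate⟩
  refine ⟨w, hw, ?_⟩
  by_contra! hlt
  have hroot : (‖(w.map T).prod‖ ^ (n⁻¹ : ℝ)) ^ n = ‖(w.map T).prod‖ :=
    Real.rpow_inv_natCast_pow (norm_nonneg _) hn
  obtain ⟨s, hs, hsT⟩ := exists_between
    (lt_of_pow_lt_pow_left₀ n (jointSpectralRadius_nonneg T) (hroot.trans_lt hlt))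
  have hs0 : 0 < s := (Real.rpow_nonneg (norm_nonneg _) _).trans_lt hs
  refine hsT.not_ge (GrowthLE.jointSpectralRadius_le (.of_forall_length_eq hn hs0 fun v hv =>
    (hmax v hv).trans ?_) hs0.le)
  rw [← hroot]
  gcongr

section Smul

variable {𝕜 : Type*} [NormedField 𝕜] [NormedAlgebra 𝕜 A]

theorem prod_map_smul (a : 𝕜) (T : ι → A) (w : List ι) :
    (w.map (a • T)).prod = a ^ w.length • (w.map T).prod := by
  simpa [Function.comp_def, Pi.smul_def] using (List.smul_prod (w.map T) a).symm

theorem norm_prod_map_smul (a : 𝕜) (T : ι → A) (w : List ι) :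
    ‖(w.map (a • T)).prod‖ = ‖a‖ ^ w.length * ‖(w.map T).prod‖ := by
  rw [prod_map_smul, norm_smul, norm_pow]

theorem jointSpectralRadius_smul_le [Finite ι] {a : 𝕜} (ha : a ≠ 0) (T : ι → A) :
    jointSpectralRadius (a • T) ≤ ‖a‖ * jointSpectralRadius T := by
  have ha' : 0 < ‖a‖ := norm_pos_iff.2 ha
  refine jointSpectralRadius_le_of_forall_growthLE
    (mul_nonneg ha'.le (jointSpectralRadius_nonneg T)) fun s hs => ?_
  obtain ⟨C, hC⟩ := GrowthLE.of_jointSpectralRadius_lt ((lt_div_iff₀' ha').2 hs)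
  refine ⟨C, fun w => ?_⟩
  calc ‖(w.map (a • T)).prod‖ ≤ ‖a‖ ^ w.length * (C * (s / ‖a‖) ^ w.length) := by
        rw [norm_prod_map_smul]; gcongr; exact hC w
    _ = C * s ^ w.length := by rw [mul_left_comm, ← mul_pow, mul_div_cancel₀ _ ha'.ne']

theorem jointSpectralRadius_smul [Finite ι] {a : 𝕜} (ha : a ≠ 0) (T : ι → A) :
    jointSpectralRadius (a • T) = ‖a‖ * jointSpectralRadius T := by
  refine (jointSpectralRadius_smul_le ha T).antisymm ?_
  have h := jointSpectralRadius_smul_le (inv_ne_zero ha) (a • T)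
  rwa [inv_smul_smul₀ ha, norm_inv, le_inv_mul_iff₀ (norm_pos_iff.2 ha)] at h

end Smul

end JointSpectralRadius

section Factor

variable {α : Type*}

/-- The factor `i m, …, i (m + n - 1)` of length `n` of the sequence `i`, starting at `m`. -/
def factor (i : ℕ → α) (m n : ℕ) : List α := List.ofFn fun t : Fin n => i (m + t)

@[simp]
theorem length_factor (i : ℕ → α) (m n : ℕ) : (factor i m n).length = n := List.length_ofFn

theorem factor_add (i : ℕ → α) (m a b : ℕ) :
    factor i m (a + b) = factor i m a ++ factor i (m + a) b := by
  simp [factor, List.ofFn_add, add_assoc]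

theorem factor_isInfix_factor_zero (i : ℕ → α) (m n : ℕ) :
    factor i m n <:+: factor i 0 (m + n) := by
  rw [factor_add, zero_add]
  exact (List.suffix_append _ _).isInfix

theorem isClosed_setOf_factor [TopologicalSpace α] [DiscreteTopology α] (P : List α → Prop)
    (m n : ℕ) : IsClosed {i : ℕ → α | P (factor i m n)} :=
  (isClosed_discrete {u : Fin n → α | P (List.ofFn u)}).preimage
    (f := fun (i : ℕ → α) (t : Fin n) => i (m + t)) (by fun_prop)

theorem exists_sequence_of_forall_exists_word [Finite α] {P : List α → Prop}
    (hP : ∀ u w, u <:+: w → P w → P u) (h : ∀ n, ∃ w : List α, w.length = n ∧ P w) :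
    ∃ i : ℕ → α, ∀ m n, P (factor i m n) := by
  let : TopologicalSpace α := ⊥
  have : DiscreteTopology α := ⟨rfl⟩
  have hclosed (n : ℕ) : IsClosed {i : ℕ → α | P (factor i 0 n)} := isClosed_setOf_factor P 0 n
  have hne (n : ℕ) : {i : ℕ → α | P (factor i 0 n)}.Nonempty := by
    obtain ⟨w, hw, hPw⟩ := h (n + 1)
    have hpos : 0 < w.length := by omega
    have htake : factor (fun t => w.getD t w[0]) 0 n = w.take n :=
      List.ext_getElem (by simp; omega) fun t ht _ => by
        have : t < w.length := by simp at ht; omega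
        simp [factor, this]
    exact ⟨_, hP _ _ (htake ▸ (List.take_prefix n w).isInfix) hPw⟩
  obtain ⟨i, hi⟩ := IsCompact.nonempty_iInter_of_sequence_nonempty_isCompact_isClosed
    (fun n => {i : ℕ → α | P (factor i 0 n)})
    (fun n i hi => hP _ _ (factor_add i 0 n 1 ▸ (List.prefix_append _ _).isInfix) hi)
    hne (hclosed 0).isCompact hclosed
  exact ⟨i, fun m n => hP _ _ (factor_isInfix_factor_zero i m n) (Set.mem_iInter.1 hi (m + n))⟩

theorem exists_sequence_le_norm_prod_factor [Finite α] [Nonempty α] {A : Type*} [NormedRing A]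
    {T : α → A} (hT : GrowthLE T 1) (hρ : 1 ≤ jointSpectralRadius T) :
    ∃ c > 0, ∃ i : ℕ → α, ∀ m n, c ≤ ‖((factor i m n).map T).prod‖ := by
  obtain ⟨C, hC0, hC⟩ := hT.exists_pos zero_le_one
  simp only [one_pow, mul_one] at hC
  have hwords (n : ℕ) : ∃ u : List α, u.length = n ∧
      ∃ w : List α, u <:+: w ∧ 1 ≤ ‖(w.map T).prod‖ := by
    obtain ⟨w, hw, hle⟩ := exists_jointSpectralRadius_pow_le_norm_prod T n.succ_ne_zero
    exact ⟨w.take n, by simp [hw], w, (List.take_prefix n w).isInfix, (one_le_pow₀ hρ).trans hle⟩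
  obtain ⟨i, hi⟩ := exists_sequence_of_forall_exists_word
    (fun u w huw ⟨v, hwv, hv⟩ => ⟨v, huw.trans hwv, hv⟩) hwords
  refine ⟨(C * C)⁻¹, by positivity, i, fun m n => ?_⟩
  obtain ⟨w, ⟨a, b, rfl⟩, hw⟩ := hi m n
  rw [inv_le_iff_one_le_mul₀' (by positivity)]
  calc 1 ≤ ‖(a.map T).prod * ((factor i m n).map T).prod * (b.map T).prod‖ := by
        simpa only [List.map_append, List.prod_append] using hw
    _ ≤ C * ‖((factor i m n).map T).prod‖ * C :=
        norm_mul_le_of_le (norm_mul_le_of_le (hC a) le_rfl) (hC b)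
    _ = C * C * ‖((factor i m n).map T).prod‖ := by ring

end Factor

section Spectrum

theorem one_mem_spectrum_of_mul_eq_self {𝕜 A : Type*} [CommSemiring 𝕜] [Ring A] [Algebra 𝕜 A]
    {P Q : A} (hP : P ≠ 0) (h : P * Q = P) : (1 : 𝕜) ∈ spectrum 𝕜 Q := by
  rw [spectrum.mem_iff, map_one]
  exact fun hu => hP (hu.mul_left_eq_zero.1 (by rw [mul_sub, mul_one, h, sub_self]))

section Perturbation

variable {𝕜 E : Type*} [NontriviallyNormedField 𝕜] [CompleteSpace 𝕜] [IsAlgClosed 𝕜]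
  [NormedAddCommGroup E] [NormedSpace 𝕜 E] [FiniteDimensional 𝕜 E] {r : ℝ} {z : 𝕜}

theorem pow_finrank_le_norm_det_algebraMap_sub {A : E →L[𝕜] E}
    (hA : ∀ y ∈ spectrum 𝕜 A, ‖y‖ ≤ r) (hz : r ≤ ‖z‖) :
    (‖z‖ - r) ^ Module.finrank 𝕜 E ≤ ‖(algebraMap 𝕜 (E →L[𝕜] E) z - A).det‖ := by
  have hsplits := IsAlgClosed.splits (LinearMap.charpoly (A : E →ₗ[𝕜] E))
  have hdet : (algebraMap 𝕜 (E →L[𝕜] E) z - A).det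
      = ((LinearMap.charpoly (A : E →ₗ[𝕜] E)).roots.map fun y => z - y).prod := by
    rw [← hsplits.eval_eq_prod_roots_of_monic (LinearMap.charpoly_monic _),
      LinearMap.eval_charpoly]
    rfl
  have hroots : ∀ y ∈ (LinearMap.charpoly (A : E →ₗ[𝕜] E)).roots, ‖y‖ ≤ r := fun y hy =>
    hA y (AlgEquiv.spectrum_eq (Module.End.toContinuousLinearMap (𝕜 := 𝕜) E).symm A ▸
      (Module.End.mem_spectrum_iff_isRoot_charpoly _ y).2 (Polynomial.isRoot_of_mem_roots hy))
  calc (‖z‖ - r) ^ Module.finrank 𝕜 E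
      = ((LinearMap.charpoly (A : E →ₗ[𝕜] E)).roots.map fun _ => ‖z‖ - r).prod := by
        rw [Multiset.map_const', Multiset.prod_replicate, ← hsplits.natDegree_eq_card_roots,
          LinearMap.charpoly_natDegree]
    _ ≤ ((LinearMap.charpoly (A : E →ₗ[𝕜] E)).roots.map fun y => ‖z - y‖).prod :=
        Multiset.prod_map_le_prod_map₀ _ _ (fun _ _ => sub_nonneg.2 hz) fun y hy =>
          (sub_le_sub_left (hroots y hy) _).trans (norm_sub_norm_le z y)
    _ = ‖(algebraMap 𝕜 (E →L[𝕜] E) z - A).det‖ := by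
        rw [hdet]
        exact (congrArg Multiset.prod (Multiset.map_map _ _ _)).symm.trans
          (map_multiset_prod (normHom : 𝕜 →*₀ ℝ) _).symm

theorem eventually_exists_mem_spectrum_le_norm {Q : E →L[𝕜] E} (hz : z ∈ spectrum 𝕜 Q)
    (hr : r < ‖z‖) : ∀ᶠ A in 𝓝 Q, ∃ y ∈ spectrum 𝕜 A, r ≤ ‖y‖ := by
  have hdet : (algebraMap 𝕜 (E →L[𝕜] E) z - Q).det = 0 := by
    by_contra hne
    refine hz ((isUnit_map_iff (Module.End.toContinuousLinearMap (𝕜 := 𝕜) E).symm _).1 ?_)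
    exact (LinearMap.isUnit_iff_isUnit_det _).2 (isUnit_iff_ne_zero.2 hne)
  have hlim : Tendsto (fun A => ‖(algebraMap 𝕜 (E →L[𝕜] E) z - A).det‖) (𝓝 Q) (𝓝 0) := by
    rw [← norm_zero (E := 𝕜), ← hdet]
    exact (ContinuousLinearMap.continuous_det.comp
      (continuous_const.sub continuous_id)).norm.tendsto Q
  filter_upwards [hlim.eventually_lt_const (pow_pos (sub_pos.2 hr) (Module.finrank 𝕜 E))] with A hA
  by_contra! hlt
  exact hA.not_ge (pow_finrank_le_norm_det_algebraMap_sub (fun y hy => (hlt y hy).le) hr.le)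

end Perturbation

theorem exists_mul_eq_self_tendsto_prod {ι A : Type*} [NormedRing A] [ProperSpace A]
    {T : ι → A} (hT : GrowthLE T 1) {c : ℝ} (hc : 0 < c) {i : ℕ → ι}
    (hi : ∀ n, c ≤ ‖((factor i 0 n).map T).prod‖) (N : ℕ) :
    ∃ P ≠ 0, ∃ Q, P * Q = P ∧ ∃ v : ℕ → List ι, (∀ k, N ≤ (v k).length) ∧
      Tendsto (fun k => ((v k).map T).prod) atTop (𝓝 Q) := by
  obtain ⟨C, hC⟩ := hT
  have hball (w : List ι) : (w.map T).prod ∈ Metric.closedBall (0 : A) C := by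
    simpa using hC w
  obtain ⟨P, -, φ, hφ, hP⟩ := tendsto_subseq_of_bounded Metric.isBounded_closedBall
    fun n => hball (factor i 0 n)
  let v (k : ℕ) : List ι := factor i (φ k) (φ (k + N) - φ k)
  obtain ⟨Q, -, χ, hχ, hQ⟩ := tendsto_subseq_of_bounded Metric.isBounded_closedBall
    fun k => hball (v k)
  have hv (k : ℕ) : ((factor i 0 (φ k)).map T).prod * ((v k).map T).prod
      = ((factor i 0 (φ (k + N))).map T).prod := by
    rw [← List.prod_append, ← List.map_append,
      ← Nat.add_sub_cancel' (hφ.monotone (Nat.le_add_right k N)), factor_add, zero_add]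
  refine ⟨P, ?_, Q, ?_, v ∘ χ, fun k => ?_, hQ⟩
  · exact norm_pos_iff.1 (hc.trans_le (ge_of_tendsto' hP.norm fun k => hi (φ k)))
  · exact tendsto_nhds_unique (((hP.comp hχ.tendsto_atTop).mul hQ).congr fun k => hv (χ k))
      ((hP.comp (tendsto_add_atTop_nat N)).comp hχ.tendsto_atTop)
  · have := hφ.add_le_nat N (χ k)
    simp only [v, Function.comp_apply, length_factor, add_comm _ N]
    omega

end Spectrum

section AttainsGrowthRate

variable {ι A B : Type*} [NormedRing A] [NormedAlgebra ℂ A] [NormedRing B] [NormedAlgebra ℂ B]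
  {T : ι → A} {R : ι → B} {ρ : ℝ}

/-- The family `T` attains the exponential growth rate `ρ`, both in norm, uniformly over all
factors of one infinite sequence, and in spectral radius, along arbitrarily long words. The factor
`1 / 2` stands for any constant: it disappears under the root of order `w.length`. -/
structure AttainsGrowthRate (T : ι → A) (ρ : ℝ) : Prop where
  exists_sequence : ∃ c > 0, ∃ i : ℕ → ι, ∀ m n, c * ρ ^ n ≤ ‖((factor i m n).map T).prod‖
  exists_mem_spectrum : ∀ N, ∃ w : List ι, N ≤ w.length ∧
    ∃ z ∈ spectrum ℂ (w.map T).prod, ρ ^ w.length / 2 ≤ ‖z‖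

theorem AttainsGrowthRate.of_compression (hR : AttainsGrowthRate R ρ) {D : ℝ} (hD : 0 ≤ D)
    (hnorm : ∀ w : List ι, ‖(w.map R).prod‖ ≤ D * ‖(w.map T).prod‖)
    (hspec : ∀ w : List ι, spectrum ℂ (w.map R).prod ⊆ spectrum ℂ (w.map T).prod) :
    AttainsGrowthRate T ρ where
  exists_sequence := by
    obtain ⟨c, hc, i, hi⟩ := hR.exists_sequence
    refine ⟨c / (D + 1), by positivity, i, fun m n => ?_⟩
    rw [div_mul_eq_mul_div, div_le_iff₀' (by positivity)]
    exact ((hi m n).trans (hnorm _)).trans (by gcongr; exact le_add_of_nonneg_right zero_le_one)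
  exists_mem_spectrum N := by
    obtain ⟨w, hw, z, hz, hle⟩ := hR.exists_mem_spectrum N
    exact ⟨w, hw, z, hspec w hz, hle⟩

theorem AttainsGrowthRate.smul (hT : AttainsGrowthRate T ρ) {a : ℂ} (ha : a ≠ 0) :
    AttainsGrowthRate (a • T) (‖a‖ * ρ) where
  exists_sequence := by
    obtain ⟨c, hc, i, hi⟩ := hT.exists_sequence
    refine ⟨c, hc, i, fun m n => ?_⟩
    rw [norm_prod_map_smul, length_factor, mul_pow, mul_left_comm]
    gcongr
    exact hi m n
  exists_mem_spectrum N := by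
    obtain ⟨w, hw, z, hz, hle⟩ := hT.exists_mem_spectrum N
    refine ⟨w, hw, a ^ w.length * z, ?_, ?_⟩
    · rw [prod_map_smul]
      exact (spectrum.smul_mem_smul_iff (r := Units.mk0 _ (pow_ne_zero w.length ha))).2 hz
    · rw [norm_mul, norm_pow, mul_pow, mul_div_assoc]
      gcongr

theorem AttainsGrowthRate.of_growthLE_one {E : Type*} [NormedAddCommGroup E] [NormedSpace ℂ E]
    [FiniteDimensional ℂ E] [Finite ι] [Nonempty ι] {T : ι → E →L[ℂ] E} (hT : GrowthLE T 1)
    (hρ : 1 ≤ jointSpectralRadius T) : AttainsGrowthRate T 1 := by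
  have : ProperSpace (E →L[ℂ] E) := FiniteDimensional.proper ℂ _
  obtain ⟨c, hc, i, hi⟩ := exists_sequence_le_norm_prod_factor hT hρ
  refine ⟨⟨c, hc, i, by simpa using hi⟩, fun N => ?_⟩
  obtain ⟨P, hP, Q, hPQ, v, hv, hlim⟩ := exists_mul_eq_self_tendsto_prod hT hc (hi 0) N
  obtain ⟨k, z, hz, hle⟩ := (hlim.eventually (eventually_exists_mem_spectrum_le_norm
    (r := 1 / 2) (one_mem_spectrum_of_mul_eq_self (𝕜 := ℂ) hP hPQ) (by norm_num))).exists
  exact ⟨v k, hv k, z, hz, by simpa using hle⟩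

end AttainsGrowthRate

section Intertwining

variable {𝕜 ι E F : Type*} [NontriviallyNormedField 𝕜] [NormedAddCommGroup E] [NormedSpace 𝕜 E]
  [NormedAddCommGroup F] [NormedSpace 𝕜 F]

theorem prod_comp_of_forall_comp_eq {T : ι → E →L[𝕜] E} {R : ι → F →L[𝕜] F} {j : F →L[𝕜] E}
    (h : ∀ k, T k ∘L j = j ∘L R k) (w : List ι) :
    (w.map T).prod ∘L j = j ∘L (w.map R).prod := by
  induction w with
  | nil => rfl
  | cons k w ih =>
    simp only [List.map_cons, List.prod_cons, ContinuousLinearMap.mul_def,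
      ContinuousLinearMap.comp_assoc, ih]
    rw [← ContinuousLinearMap.comp_assoc, h, ContinuousLinearMap.comp_assoc]

theorem comp_prod_of_forall_comp_eq {T : ι → E →L[𝕜] E} {R : ι → F →L[𝕜] F} {q : E →L[𝕜] F}
    (h : ∀ k, q ∘L T k = R k ∘L q) (w : List ι) :
    q ∘L (w.map T).prod = (w.map R).prod ∘L q := by
  induction w with
  | nil => rfl
  | cons k w ih =>
    simp only [List.map_cons, List.prod_cons, ContinuousLinearMap.mul_def,
      ContinuousLinearMap.comp_assoc, ← ih]
    rw [← ContinuousLinearMap.comp_assoc, h, ContinuousLinearMap.comp_assoc]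

variable [FiniteDimensional 𝕜 F] {A : E →L[𝕜] E} {B : F →L[𝕜] F} {j : F →L[𝕜] E} {q : E →L[𝕜] F}

instance : IsDedekindFiniteMonoid (F →L[𝕜] F) :=
  .of_injective (ContinuousLinearMap.toLinearMapRingHom : (F →L[𝕜] F) →+* F →ₗ[𝕜] F)
    ContinuousLinearMap.coe_injective

theorem spectrum_subset_of_comp_left_eq (hqj : q ∘L j = .id 𝕜 F) (h : A ∘L j = j ∘L B) :
    spectrum 𝕜 B ⊆ spectrum 𝕜 A := by
  intro z hz hu
  obtain ⟨V, hV⟩ := hu.exists_left_inv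
  have hj : (algebraMap 𝕜 (E →L[𝕜] E) z - A) ∘L j = j ∘L (algebraMap 𝕜 (F →L[𝕜] F) z - B) := by
    simp [ContinuousLinearMap.sub_comp, h, Algebra.algebraMap_eq_smul_one,
      ContinuousLinearMap.one_def]
  refine hz (.of_mul_eq_one_right (q ∘L V ∘L j) ?_)
  calc (q ∘L V ∘L j) * (algebraMap 𝕜 (F →L[𝕜] F) z - B)
      = q ∘L (V * (algebraMap 𝕜 (E →L[𝕜] E) z - A)) ∘L j := by
        simp only [ContinuousLinearMap.mul_def, ContinuousLinearMap.comp_assoc, hj]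
    _ = 1 := by rw [hV]; exact hqj

theorem spectrum_subset_of_comp_right_eq (hqj : q ∘L j = .id 𝕜 F) (h : q ∘L A = B ∘L q) :
    spectrum 𝕜 B ⊆ spectrum 𝕜 A := by
  intro z hz hu
  obtain ⟨V, hV⟩ := hu.exists_right_inv
  have hq : (algebraMap 𝕜 (F →L[𝕜] F) z - B) ∘L q = q ∘L (algebraMap 𝕜 (E →L[𝕜] E) z - A) := by
    simp [ContinuousLinearMap.sub_comp, h, Algebra.algebraMap_eq_smul_one,
      ContinuousLinearMap.one_def]
  refine hz (.of_mul_eq_one (q ∘L V ∘L j) ?_)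
  calc (algebraMap 𝕜 (F →L[𝕜] F) z - B) * (q ∘L V ∘L j)
      = q ∘L ((algebraMap 𝕜 (E →L[𝕜] E) z - A) * V) ∘L j := by
        rw [ContinuousLinearMap.mul_def, ← ContinuousLinearMap.comp_assoc, hq]
        rfl
    _ = 1 := by rw [hV]; exact hqj

end Intertwining

section TriangularSplitting

variable {𝕜 ι E U F : Type*} [NontriviallyNormedField 𝕜] [NormedAddCommGroup E]
  [NormedSpace 𝕜 E] [NormedAddCommGroup U] [NormedSpace 𝕜 U] [NormedAddCommGroup F]
  [NormedSpace 𝕜 F] {T : ι → E →L[𝕜] E} {r r' : ℝ}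

/-- A decomposition `E = U ⊕ F` in which every operator of the family `T` is block upper
triangular: the image of `U` under `incl` is invariant. -/
structure TriangularSplitting (T : ι → E →L[𝕜] E) (U F : Type*) [NormedAddCommGroup U]
    [NormedSpace 𝕜 U] [NormedAddCommGroup F] [NormedSpace 𝕜 F] where
  incl : U →L[𝕜] E
  proj : E →L[𝕜] U
  sect : F →L[𝕜] E
  quot : E →L[𝕜] F
  proj_comp_incl : proj ∘L incl = .id 𝕜 U
  quot_comp_sect : quot ∘L sect = .id 𝕜 F
  incl_comp_proj_add_sect_comp_quot : incl ∘L proj + sect ∘L quot = .id 𝕜 E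
  quot_comp_comp_incl : ∀ k, quot ∘L T k ∘L incl = 0

theorem norm_comp_le_of_le {A : U →L[𝕜] F} {B : E →L[𝕜] U} {a b : ℝ} (hA : ‖A‖ ≤ a)
    (hB : ‖B‖ ≤ b) : ‖A ∘L B‖ ≤ a * b :=
  (A.opNorm_comp_le B).trans (mul_le_mul hA hB (norm_nonneg B) ((norm_nonneg A).trans hA))

namespace TriangularSplitting

variable (s : TriangularSplitting T U F)

/-- The diagonal blocks on the invariant subspace. -/
def upper (k : ι) : U →L[𝕜] U := s.proj ∘L T k ∘L s.incl

/-- The diagonal blocks on the quotient. -/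
def lower (k : ι) : F →L[𝕜] F := s.quot ∘L T k ∘L s.sect

theorem incl_proj_add_sect_quot (x : E) : s.incl (s.proj x) + s.sect (s.quot x) = x :=
  DFunLike.congr_fun s.incl_comp_proj_add_sect_comp_quot x

theorem comp_incl (k : ι) : T k ∘L s.incl = s.incl ∘L s.upper k := by
  ext x
  have hx : s.quot (T k (s.incl x)) = 0 := DFunLike.congr_fun (s.quot_comp_comp_incl k) x
  simpa [hx, upper] using (s.incl_proj_add_sect_quot (T k (s.incl x))).symm

theorem quot_comp (k : ι) : s.quot ∘L T k = s.lower k ∘L s.quot := by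
  ext x
  have hx : s.quot (T k (s.incl (s.proj x))) = 0 :=
    DFunLike.congr_fun (s.quot_comp_comp_incl k) (s.proj x)
  calc s.quot (T k x)
      = s.quot (T k (s.incl (s.proj x) + s.sect (s.quot x))) := by rw [incl_proj_add_sect_quot]
    _ = (s.lower k ∘L s.quot) x := by simp [hx, lower]

theorem proj_comp (k : ι) :
    s.proj ∘L T k = s.upper k ∘L s.proj + (s.proj ∘L T k ∘L s.sect) ∘L s.quot := by
  ext x
  calc s.proj (T k x)
      = s.proj (T k (s.incl (s.proj x) + s.sect (s.quot x))) := by rw [incl_proj_add_sect_quot]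
    _ = (s.upper k ∘L s.proj + (s.proj ∘L T k ∘L s.sect) ∘L s.quot) x := by simp [upper]

theorem quot_comp_prod (w : List ι) :
    s.quot ∘L (w.map T).prod = (w.map s.lower).prod ∘L s.quot :=
  comp_prod_of_forall_comp_eq s.quot_comp w

theorem prod_comp_incl (w : List ι) :
    (w.map T).prod ∘L s.incl = s.incl ∘L (w.map s.upper).prod :=
  prod_comp_of_forall_comp_eq s.comp_incl w

theorem upper_prod (w : List ι) :
    (w.map s.upper).prod = s.proj ∘L (w.map T).prod ∘L s.incl := by
  rw [prod_comp_incl, ← ContinuousLinearMap.comp_assoc, s.proj_comp_incl,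
    ContinuousLinearMap.id_comp]

theorem lower_prod (w : List ι) :
    (w.map s.lower).prod = s.quot ∘L (w.map T).prod ∘L s.sect := by
  rw [← ContinuousLinearMap.comp_assoc, quot_comp_prod, ContinuousLinearMap.comp_assoc,
    s.quot_comp_sect, ContinuousLinearMap.comp_id]

theorem norm_upper_prod_le (w : List ι) :
    ‖(w.map s.upper).prod‖ ≤ ‖s.proj‖ * ‖s.incl‖ * ‖(w.map T).prod‖ := by
  rw [upper_prod, mul_assoc, mul_comm ‖s.incl‖]
  exact (s.proj.opNorm_comp_le _).trans (by gcongr; exact ContinuousLinearMap.opNorm_comp_le _ _)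

theorem norm_lower_prod_le (w : List ι) :
    ‖(w.map s.lower).prod‖ ≤ ‖s.quot‖ * ‖s.sect‖ * ‖(w.map T).prod‖ := by
  rw [lower_prod, mul_assoc, mul_comm ‖s.sect‖]
  exact (s.quot.opNorm_comp_le _).trans (by gcongr; exact ContinuousLinearMap.opNorm_comp_le _ _)

theorem upper_prod_comp_proj_comp_cons_prod (v w : List ι) (k : ι) :
    (v.map s.upper).prod ∘L s.proj ∘L ((k :: w).map T).prod
      = ((v ++ [k]).map s.upper).prod ∘L s.proj ∘L (w.map T).prod
        + (v.map s.upper).prod ∘L (s.proj ∘L T k ∘L s.sect) ∘L (w.map s.lower).prod ∘L s.quot := by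
  have hk := congrArg (fun A => (v.map s.upper).prod ∘L A ∘L (w.map T).prod) (s.proj_comp k)
  simpa [ContinuousLinearMap.comp_assoc, ContinuousLinearMap.mul_def, quot_comp_prod] using hk

-- The word `v` of diagonal blocks makes the induction on `w` possible: by the previous lemma,
-- removing the first letter of `w` appends it to `v`, up to an off-diagonal term.
theorem norm_upper_prod_comp_proj_comp_prod_le {C C' D β : ℝ} (hC0 : 0 ≤ C) (hC'0 : 0 ≤ C')
    (hr : 0 ≤ r) (hrr' : r ≤ r') (hC : ∀ w : List ι, ‖(w.map s.upper).prod‖ ≤ C * r ^ w.length)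
    (hC' : ∀ w : List ι, ‖(w.map s.lower).prod‖ ≤ C' * r ^ w.length)
    (hβ : ∀ k, ‖s.proj ∘L T k ∘L s.sect‖ ≤ β) (hD : C * ‖s.proj‖ ≤ D)
    (hDr : D * r + C * (β * (C' * ‖s.quot‖)) ≤ D * r') (w v : List ι) :
    ‖(v.map s.upper).prod ∘L s.proj ∘L (w.map T).prod‖
      ≤ D * r ^ v.length * r' ^ w.length := by
  induction w generalizing v with
  | nil =>
    calc ‖(v.map s.upper).prod ∘L s.proj‖ ≤ C * r ^ v.length * ‖s.proj‖ :=
          norm_comp_le_of_le (hC v) le_rfl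
      _ = C * ‖s.proj‖ * r ^ v.length := by ring
      _ ≤ D * r ^ v.length * r' ^ 0 := by
          rw [pow_zero, mul_one]
          gcongr
  | cons k w ih =>
    have hoff : ‖(v.map s.upper).prod ∘L (s.proj ∘L T k ∘L s.sect) ∘L (w.map s.lower).prod
        ∘L s.quot‖ ≤ C * r ^ v.length * (β * (C' * r ^ w.length * ‖s.quot‖)) :=
      norm_comp_le_of_le (hC v) (norm_comp_le_of_le (hβ k)
        (norm_comp_le_of_le (hC' w) le_rfl))
    calc ‖(v.map s.upper).prod ∘L s.proj ∘L ((k :: w).map T).prod‖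
        ≤ D * r ^ (v ++ [k]).length * r' ^ w.length
          + C * r ^ v.length * (β * (C' * r ^ w.length * ‖s.quot‖)) := by
          rw [upper_prod_comp_proj_comp_cons_prod]
          exact norm_add_le_of_le (ih _) hoff
      _ = r ^ v.length * (D * r * r' ^ w.length + C * (β * (C' * ‖s.quot‖)) * r ^ w.length) := by
          rw [List.length_append, List.length_singleton, pow_succ]
          ring
      _ ≤ r ^ v.length * (D * r * r' ^ w.length
          + C * (β * (C' * ‖s.quot‖)) * r' ^ w.length) := by
          have := (norm_nonneg _).trans (hβ k)
          gcongr
      _ = r ^ v.length * r' ^ w.length * (D * r + C * (β * (C' * ‖s.quot‖))) := by ring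
      _ ≤ r ^ v.length * r' ^ w.length * (D * r') := by
          have := hr.trans hrr'
          gcongr
      _ = D * r ^ v.length * r' ^ (k :: w).length := by rw [List.length_cons, pow_succ]; ring

theorem growthLE [Finite ι] (hU : GrowthLE s.upper r) (hF : GrowthLE s.lower r) (hr : 0 ≤ r)
    (hrr' : r < r') : GrowthLE T r' := by
  obtain ⟨C, hC0, hC⟩ := hU.exists_pos hr
  obtain ⟨C', hC'0, hC'⟩ := hF.exists_pos hr
  obtain ⟨β, hβ⟩ := (Set.finite_range fun k => ‖s.proj ∘L T k ∘L s.sect‖).bddAbove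
  set b := C * (β * (C' * ‖s.quot‖))
  set D := max (C * ‖s.proj‖) (b / (r' - r))
  have hDr : D * r + b ≤ D * r' := by
    have := (div_le_iff₀ (sub_pos.2 hrr')).1 (le_max_right (C * ‖s.proj‖) (b / (r' - r)))
    linarith
  refine ⟨‖s.incl‖ * D + ‖s.sect‖ * (C' * ‖s.quot‖), fun w => ?_⟩
  have hlower : ‖(w.map s.lower).prod‖ ≤ C' * r' ^ w.length := (hC' w).trans (by gcongr)
  have hproj : ‖s.proj ∘L (w.map T).prod‖ ≤ D * r' ^ w.length := by
    simpa [ContinuousLinearMap.one_def] using s.norm_upper_prod_comp_proj_comp_prod_le hC0.le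
      hC'0.le hr hrr'.le hC hC' (fun k => hβ ⟨k, rfl⟩) (le_max_left _ _) hDr w []
  calc ‖(w.map T).prod‖
      = ‖s.incl ∘L s.proj ∘L (w.map T).prod + s.sect ∘L (w.map s.lower).prod ∘L s.quot‖ := by
        rw [← quot_comp_prod, ← ContinuousLinearMap.comp_assoc, ← ContinuousLinearMap.comp_assoc,
          ← ContinuousLinearMap.add_comp, incl_comp_proj_add_sect_comp_quot,
          ContinuousLinearMap.id_comp]
    _ ≤ ‖s.incl‖ * (D * r' ^ w.length) + ‖s.sect‖ * (C' * r' ^ w.length * ‖s.quot‖) :=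
        norm_add_le_of_le (norm_comp_le_of_le le_rfl hproj)
          (norm_comp_le_of_le le_rfl (norm_comp_le_of_le hlower le_rfl))
    _ = (‖s.incl‖ * D + ‖s.sect‖ * (C' * ‖s.quot‖)) * r' ^ w.length := by ring

theorem jointSpectralRadius_eq_max [Finite ι] :
    jointSpectralRadius T = max (jointSpectralRadius s.upper) (jointSpectralRadius s.lower) := by
  apply le_antisymm
  · refine jointSpectralRadius_le_of_forall_growthLE
      (le_max_of_le_left (jointSpectralRadius_nonneg _)) fun r' hr' => ?_
    obtain ⟨r, hr, hrr'⟩ := exists_between hr'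
    obtain ⟨hU, hF⟩ := max_lt_iff.1 hr
    exact s.growthLE (.of_jointSpectralRadius_lt hU) (.of_jointSpectralRadius_lt hF)
      ((jointSpectralRadius_nonneg _).trans hU.le) hrr'
  · exact max_le
      (jointSpectralRadius_le_of_norm_prod_le (by positivity) s.norm_upper_prod_le)
      (jointSpectralRadius_le_of_norm_prod_le (by positivity) s.norm_lower_prod_le)

end TriangularSplitting

end TriangularSplitting

section BoundedOrbits

section Submodule

variable {𝕜 ι E : Type*} [NontriviallyNormedField 𝕜] [NormedAddCommGroup E] [NormedSpace 𝕜 E]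
  {T : ι → E →L[𝕜] E}

/-- The subspace of the vectors whose orbit under all products of the family `T` is bounded. -/
def boundedOrbits (T : ι → E →L[𝕜] E) : Submodule 𝕜 E where
  carrier := {x | ∃ C, ∀ w : List ι, ‖(w.map T).prod x‖ ≤ C}
  zero_mem' := ⟨0, by simp⟩
  add_mem' := fun ⟨C, hC⟩ ⟨C', hC'⟩ =>
    ⟨C + C', fun w => by rw [map_add]; exact norm_add_le_of_le (hC w) (hC' w)⟩
  smul_mem' := fun a _ ⟨C, hC⟩ =>
    ⟨‖a‖ * C, fun w => by rw [map_smul, norm_smul]; gcongr; exact hC w⟩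

theorem apply_mem_boundedOrbits {x : E} (hx : x ∈ boundedOrbits T) (k : ι) :
    T k x ∈ boundedOrbits T := by
  obtain ⟨C, hC⟩ := hx
  exact ⟨C, fun w => by simpa using hC (w ++ [k])⟩

theorem TriangularSplitting.growthLE_upper_one {U F : Type*} [NormedAddCommGroup U]
    [NormedSpace 𝕜 U] [CompleteSpace U] [NormedAddCommGroup F] [NormedSpace 𝕜 F]
    (s : TriangularSplitting T U F) (hs : ∀ x, s.incl x ∈ boundedOrbits T) :
    GrowthLE s.upper 1 := by
  obtain ⟨C, hC⟩ := banach_steinhaus (g := fun w : List ι => (w.map s.upper).prod) fun x => by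
    obtain ⟨C, hC⟩ := hs x
    refine ⟨‖s.proj‖ * C, fun w => ?_⟩
    rw [s.upper_prod]
    exact s.proj.le_opNorm_of_le (hC w)
  exact ⟨C, by simpa using hC⟩

end Submodule

variable {𝕜 ι E : Type*} [RCLike 𝕜] [NormedAddCommGroup E] [NormedSpace 𝕜 E] {T : ι → E →L[𝕜] E}

theorem exists_forall_exists_word_two_mul_norm_le [ProperSpace E] (h : boundedOrbits T = ⊥) :
    ∃ L : ℕ, ∀ x : E, ∃ w : List ι, w.length ≤ L ∧ 2 * ‖x‖ ≤ ‖(w.map T).prod x‖ := by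
  obtain ⟨t, ht⟩ := (isCompact_sphere (0 : E) 1).elim_finite_subcover
    (fun w : List ι => {x | 2 < ‖(w.map T).prod x‖})
    (fun w => isOpen_lt continuous_const (by fun_prop)) fun x hx => by
      by_contra hbd
      simp only [Set.mem_iUnion, Set.mem_ofPred_eq, not_exists, not_lt] at hbd
      have hx0 : x ∈ boundedOrbits T := ⟨2, hbd⟩
      rw [h, Submodule.mem_bot] at hx0
      simp [hx0] at hx
  refine ⟨t.sup List.length, fun x => ?_⟩
  rcases eq_or_ne x 0 with rfl | hx
  · exact ⟨[], by simp, by simp⟩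
  obtain ⟨w, hwt, hw⟩ := Set.mem_iUnion₂.1
    (ht (mem_sphere_zero_iff_norm.2 (norm_smul_inv_norm (𝕜 := 𝕜) hx)))
  refine ⟨w, Finset.le_sup (f := List.length) hwt, ?_⟩
  rw [Set.mem_ofPred_eq, map_smul, norm_smul, norm_inv, norm_algebraMap', norm_norm,
    lt_inv_mul_iff₀' (norm_pos_iff.2 hx)] at hw
  exact hw.le

theorem exists_word_two_pow_mul_norm_le {L : ℕ}
    (hL : ∀ x : E, ∃ w : List ι, w.length ≤ L ∧ 2 * ‖x‖ ≤ ‖(w.map T).prod x‖) (m : ℕ) (x : E) :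
    ∃ w : List ι, w.length ≤ L * m ∧ 2 ^ m * ‖x‖ ≤ ‖(w.map T).prod x‖ := by
  induction m with
  | zero => exact ⟨[], by simp, by simp⟩
  | succ m ih =>
    obtain ⟨w, hw, hwx⟩ := ih
    obtain ⟨v, hv, hvx⟩ := hL ((w.map T).prod x)
    refine ⟨v ++ w, by rw [List.length_append, mul_add_one]; omega, ?_⟩
    calc 2 ^ (m + 1) * ‖x‖ = 2 * (2 ^ m * ‖x‖) := by ring
      _ ≤ 2 * ‖(w.map T).prod x‖ := by gcongr
      _ ≤ ‖((v ++ w).map T).prod x‖ := by simpa using hvx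

theorem boundedOrbits_ne_bot [Finite ι] [ProperSpace E] [Nontrivial E]
    (hT : jointSpectralRadius T ≤ 1) : boundedOrbits T ≠ ⊥ := by
  intro hbot
  obtain ⟨L, hL⟩ := exists_forall_exists_word_two_mul_norm_le hbot
  obtain ⟨r, hrL, hr⟩ : ∃ r : ℝ, r ^ L < 2 ∧ 1 < r :=
    ((((continuous_pow L).tendsto' 1 1 (one_pow L)).eventually_lt_const one_lt_two).filter_mono
      nhdsWithin_le_nhds |>.and self_mem_nhdsWithin).exists (f := 𝓝[>] 1)
  obtain ⟨C, hC0, hC⟩ := (GrowthLE.of_jointSpectralRadius_lt (hT.trans_lt hr)).exists_pos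
    (zero_le_one.trans hr.le)
  obtain ⟨x, hx⟩ := exists_ne (0 : E)
  obtain ⟨m, hm⟩ := pow_unbounded_of_one_lt C ((one_lt_div (by positivity)).2 hrL)
  obtain ⟨w, hw, hwx⟩ := exists_word_two_pow_mul_norm_le hL m x
  rw [div_pow, lt_div_iff₀ (by positivity)] at hm
  refine hm.not_ge (le_of_mul_le_mul_right (hwx.trans ?_) (norm_pos_iff.2 hx))
  calc ‖(w.map T).prod x‖ ≤ C * r ^ w.length * ‖x‖ := (w.map T).prod.le_of_opNorm_le (hC w) x
    _ ≤ C * (r ^ L) ^ m * ‖x‖ := by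
        rw [← pow_mul]
        gcongr
        exact hr.le

end BoundedOrbits

section InvariantSubspace

variable {𝕜 ι E : Type*} [NontriviallyNormedField 𝕜] [CompleteSpace 𝕜] [NormedAddCommGroup E]
  [NormedSpace 𝕜 E] [FiniteDimensional 𝕜 E] {T : ι → E →L[𝕜] E}

/-- The splitting defined by an invariant subspace `U` and a complement `F`. -/
def TriangularSplitting.ofIsCompl {U F : Submodule 𝕜 E} (hUF : IsCompl U F)
    (hU : ∀ x ∈ U, ∀ k, T k x ∈ U) : TriangularSplitting T U F where
  incl := U.subtypeL
  proj := LinearMap.toContinuousLinearMap (U.projectionOnto F hUF)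
  sect := F.subtypeL
  quot := LinearMap.toContinuousLinearMap (F.projectionOnto U hUF.symm)
  proj_comp_incl := by ext; simp
  quot_comp_sect := by ext; simp
  incl_comp_proj_add_sect_comp_quot := by
    ext x
    exact Submodule.projection_add_projection_eq_self hUF x
  quot_comp_comp_incl k := by
    ext x
    simpa using hU x x.2 k

end InvariantSubspace

section AttainedRate

variable {ι E : Type*} [Finite ι] [Nonempty ι] [NormedAddCommGroup E] [NormedSpace ℂ E]
  [FiniteDimensional ℂ E] {T : ι → E →L[ℂ] E}

theorem attainsGrowthRate_of_jointSpectralRadius_eq_one (hT : jointSpectralRadius T = 1) :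
    AttainsGrowthRate T 1 := by
  induction hn : Module.finrank ℂ E using Nat.strong_induction_on generalizing E with
  | _ n ih =>
  subst hn
  have : Nontrivial E := not_subsingleton_iff_nontrivial.1 fun _ => by
    have hzero : GrowthLE T 0 := ⟨0, by simp [ContinuousLinearMap.opNorm_subsingleton]⟩
    exact one_pos.not_ge (hT ▸ hzero.jointSpectralRadius_le le_rfl)
  have : ProperSpace E := FiniteDimensional.proper ℂ E
  have : CompleteSpace (boundedOrbits T) := FiniteDimensional.complete ℂ _
  obtain ⟨F, hF⟩ := (boundedOrbits T).exists_isCompl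
  let s : TriangularSplitting T (boundedOrbits T) F :=
    .ofIsCompl hF fun _ => apply_mem_boundedOrbits
  rcases max_choice (jointSpectralRadius s.upper) (jointSpectralRadius s.lower) with h | h <;>
    rw [← s.jointSpectralRadius_eq_max, hT] at h
  · have hU : GrowthLE s.upper 1 := s.growthLE_upper_one Subtype.property
    exact (AttainsGrowthRate.of_growthLE_one hU h.le).of_compression (by positivity)
      s.norm_upper_prod_le fun w =>
        spectrum_subset_of_comp_left_eq s.proj_comp_incl (s.prod_comp_incl w)
  · have hlt : Module.finrank ℂ F < Module.finrank ℂ E := by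
      have hpos : 0 < Module.finrank ℂ (boundedOrbits T) :=
        Submodule.one_le_finrank_iff.2 (boundedOrbits_ne_bot hT.le)
      have := Submodule.finrank_add_eq_of_isCompl hF
      omega
    exact (ih _ hlt h.symm rfl).of_compression (by positivity)
      s.norm_lower_prod_le fun w =>
        spectrum_subset_of_comp_right_eq s.quot_comp_sect (s.quot_comp_prod w)

theorem attainsGrowthRate_jointSpectralRadius [Nontrivial E] (T : ι → E →L[ℂ] E) :
    AttainsGrowthRate T (jointSpectralRadius T) := by
  rcases (jointSpectralRadius_nonneg T).eq_or_lt with h | h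
  · obtain ⟨k⟩ := ‹Nonempty ι›
    rw [← h]
    refine ⟨⟨1, one_pos, fun _ => k, fun m n => ?_⟩, fun N => ?_⟩
    · rcases eq_or_ne n 0 with rfl | hn
      · simp [factor]
      · simp [hn]
    · obtain ⟨z, hz⟩ := spectrum.nonempty ((List.replicate (N + 1) k).map T).prod
      exact ⟨List.replicate (N + 1) k, by simp, z, hz, by simp⟩
  · have ha : (jointSpectralRadius T : ℂ) ≠ 0 := by exact_mod_cast h.ne'
    have hnorm : ‖(jointSpectralRadius T : ℂ)‖ = jointSpectralRadius T :=
      RCLike.norm_of_nonneg h.le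
    have hone : jointSpectralRadius ((jointSpectralRadius T : ℂ)⁻¹ • T) = 1 := by
      rw [jointSpectralRadius_smul (inv_ne_zero ha), norm_inv, hnorm, inv_mul_cancel₀ h.ne']
    have hattains := (attainsGrowthRate_of_jointSpectralRadius_eq_one hone).smul ha
    rwa [smul_inv_smul₀ ha, hnorm, mul_one] at hattains

end AttainedRate

section Roots

theorem eventually_rpow_inv_le {C r r' : ℝ} (hr : 0 ≤ r) (hrr' : r < r') :
    ∀ᶠ n : ℕ in atTop, ∀ x : ℝ, 0 ≤ x → x ≤ C * r ^ n → x ^ (n⁻¹ : ℝ) ≤ r' := by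
  have hr' : 0 < r' := hr.trans_lt hrr'
  have h := (tendsto_pow_atTop_nhds_zero_of_lt_one (r := r / r') (by positivity)
    ((div_lt_one hr').2 hrr')).const_mul C
  rw [mul_zero] at h
  filter_upwards [h.eventually_lt_const one_pos, eventually_ne_atTop 0] with n hn hn0 x hx0 hx
  rw [div_pow, mul_div_assoc', div_lt_one (by positivity)] at hn
  calc x ^ (n⁻¹ : ℝ) ≤ (r' ^ n) ^ (n⁻¹ : ℝ) :=
        Real.rpow_le_rpow hx0 (hx.trans hn.le) (by positivity)
    _ = r' := Real.pow_rpow_inv_natCast hr'.le hn0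

theorem eventually_le_rpow_inv {c r r' : ℝ} (hc : 0 < c) (hr' : 0 ≤ r') (hrr' : r' < r) :
    ∀ᶠ n : ℕ in atTop, ∀ x : ℝ, c * r ^ n ≤ x → r' ≤ x ^ (n⁻¹ : ℝ) := by
  have hr : 0 < r := hr'.trans_lt hrr'
  have h := tendsto_pow_atTop_nhds_zero_of_lt_one (r := r' / r) (by positivity)
    ((div_lt_one hr).2 hrr')
  filter_upwards [h.eventually_lt_const hc, eventually_ne_atTop 0] with n hn hn0 x hx
  rw [div_pow, div_lt_iff₀ (by positivity)] at hn
  calc r' = (r' ^ n) ^ (n⁻¹ : ℝ) := (Real.pow_rpow_inv_natCast hr' hn0).symm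
    _ ≤ x ^ (n⁻¹ : ℝ) := Real.rpow_le_rpow (by positivity) (hn.le.trans hx) (by positivity)

theorem tendsto_rpow_inv_of_growth {x : ℕ → ℝ} {ρ c : ℝ} (hρ : 0 ≤ ρ) (hx : ∀ n, 0 ≤ x n)
    (hub : ∀ r > ρ, ∃ C, ∀ n, x n ≤ C * r ^ n) (hc : 0 < c) (hlb : ∀ n, c * ρ ^ n ≤ x n) :
    Tendsto (fun n : ℕ => x n ^ (n⁻¹ : ℝ)) atTop (𝓝 ρ) := by
  refine tendsto_order.2 ⟨fun a ha => ?_, fun a ha => ?_⟩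
  · obtain ⟨b, hab, hb⟩ := exists_between ha
    rcases lt_or_ge b 0 with hb0 | hb0
    · exact .of_forall fun n => hab.trans (hb0.trans_le (Real.rpow_nonneg (hx n) _))
    · filter_upwards [eventually_le_rpow_inv hc hb0 hb] with n hn
      exact hab.trans_le (hn _ (hlb n))
  · obtain ⟨b, hb, hba⟩ := exists_between ha
    obtain ⟨s, hs, hsb⟩ := exists_between hb
    obtain ⟨C, hC⟩ := hub s hs
    filter_upwards [eventually_rpow_inv_le (C := C) (hρ.trans hs.le) hsb] with n hn
    exact (hn _ (hx n) (hC n)).trans_lt hba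

end Roots

theorem exists_seminorm_le_mul_of_definite {𝕜 V : Type*} [NontriviallyNormedField 𝕜]
    [CompleteSpace 𝕜] [AddCommGroup V] [Module 𝕜 V] [FiniteDimensional 𝕜 V] {p : Seminorm 𝕜 V}
    (hp : ∀ x, p x = 0 → x = 0) (q : Seminorm 𝕜 V) : ∃ C > 0, ∀ x, q x ≤ C * p x := by
  let : Norm V := ⟨p⟩
  have core : NormedSpace.Core 𝕜 V :=
    ⟨⟨apply_nonneg p, map_smul_eq_mul p, map_add_le_add p⟩,
      fun x => ⟨hp x, fun h => h ▸ map_zero p⟩⟩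
  let : NormedAddCommGroup V := .ofCore core
  let : NormedSpace 𝕜 V := .ofCore core
  let b := Module.finBasis 𝕜 V
  let coord (k : Fin (Module.finrank 𝕜 V)) : V →L[𝕜] 𝕜 :=
    LinearMap.toContinuousLinearMap (b.coord k)
  refine ⟨∑ k, ‖coord k‖ * q (b k) + 1, by positivity, fun x => ?_⟩
  calc q x = q (∑ k, b.repr x k • b k) := by rw [b.sum_repr]
    _ ≤ ∑ k, q (b.repr x k • b k) :=
        Finset.le_sum_of_subadditive q (map_zero q).le (map_add_le_add q) _ _
    _ ≤ ∑ k, ‖coord k‖ * p x * q (b k) := by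
        gcongr with k
        rw [map_smul_eq_mul]
        gcongr
        exact (coord k).le_opNorm x
    _ = (∑ k, ‖coord k‖ * q (b k)) * p x := by
        rw [Finset.sum_mul]
        exact Finset.sum_congr rfl fun k _ => by ring
    _ ≤ (∑ k, ‖coord k‖ * q (b k) + 1) * p x := by
        gcongr
        exact le_add_of_nonneg_right zero_le_one

section Matrices

variable {d K : ℕ}

theorem finWordProd_eq (S : Fin K → Matrix (Fin d) (Fin d) ℂ) {n : ℕ} (w : Fin n → Fin K) :
    finWordProd S w = ((List.ofFn w).map S).prod := by
  simp [finWordProd, List.map_ofFn, Function.comp_def]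

theorem wordProd_eq (S : Fin K → Matrix (Fin d) (Fin d) ℂ) (i : ℕ → Fin K) (n : ℕ) :
    wordProd S i n = ((factor i 0 n).map S).prod := by
  simp [wordProd, factor, List.map_ofFn, Function.comp_def]

/-- A matrix as a continuous linear operator on `ℂ^d`. The norm of `ℂ^d` is the sup norm, so that
of the operators is a concrete submultiplicative matrix norm. -/
def toOperator (d : ℕ) : Matrix (Fin d) (Fin d) ℂ ≃ₐ[ℂ] ((Fin d → ℂ) →L[ℂ] (Fin d → ℂ)) :=
  Matrix.toLinAlgEquiv'.trans (Module.End.toContinuousLinearMap (Fin d → ℂ))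

theorem prod_map_toOperator_comp (S : Fin K → Matrix (Fin d) (Fin d) ℂ) (w : List (Fin K)) :
    (w.map (toOperator d ∘ S)).prod = toOperator d (w.map S).prod := by
  rw [map_list_prod, List.map_map]

theorem spectralRadius_le_norm_toOperator [NeZero d] (A : Matrix (Fin d) (Fin d) ℂ) :
    spectralRadius ℂ A ≤ ‖toOperator d A‖₊ := by
  have h := spectrum.spectralRadius_le_nnnorm (𝕜 := ℂ) (toOperator d A)
  rwa [spectralRadius, AlgEquiv.spectrum_eq] at h

theorem specRad_nonneg (A : Matrix (Fin d) (Fin d) ℂ) : 0 ≤ specRad A := ENNReal.toReal_nonneg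

theorem specRad_le_norm_toOperator [NeZero d] (A : Matrix (Fin d) (Fin d) ℂ) :
    specRad A ≤ ‖toOperator d A‖ :=
  ENNReal.toReal_le_coe_of_le_coe (spectralRadius_le_norm_toOperator A)

theorem norm_le_specRad [NeZero d] {A : Matrix (Fin d) (Fin d) ℂ} {z : ℂ}
    (hz : z ∈ spectrum ℂ (toOperator d A)) : ‖z‖ ≤ specRad A := by
  rw [AlgEquiv.spectrum_eq] at hz
  have hle : (‖z‖₊ : ℝ≥0∞) ≤ spectralRadius ℂ A :=
    le_iSup₂ (f := fun y (_ : y ∈ spectrum ℂ A) => (‖y‖₊ : ℝ≥0∞)) z hz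
  have htop : spectralRadius ℂ A ≠ ⊤ :=
    ne_top_of_le_ne_top ENNReal.coe_ne_top (spectralRadius_le_norm_toOperator A)
  simpa [specRad] using ENNReal.toReal_mono htop hle

section BergerWang

variable [NeZero d] [NeZero K] (S : Fin K → Matrix (Fin d) (Fin d) ℂ) {r : ℝ}

theorem eventually_iSup_specRad_le (hr : jointSpectralRadius (toOperator d ∘ S) < r) :
    ∀ᶠ n : ℕ in atTop, ⨆ w : Fin n → Fin K, specRad (finWordProd S w) ^ (n⁻¹ : ℝ) ≤ r := by
  obtain ⟨s, hs, hsr⟩ := exists_between hr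
  obtain ⟨C, hC⟩ := GrowthLE.of_jointSpectralRadius_lt hs
  filter_upwards [eventually_rpow_inv_le (C := C) ((jointSpectralRadius_nonneg _).trans hs.le) hsr]
    with n hn
  refine ciSup_le fun w => hn _ (specRad_nonneg _) ((specRad_le_norm_toOperator _).trans ?_)
  simpa only [finWordProd_eq, prod_map_toOperator_comp, List.length_ofFn] using hC (List.ofFn w)

theorem frequently_le_iSup_specRad (hr0 : 0 ≤ r)
    (hr : r < jointSpectralRadius (toOperator d ∘ S)) :
    ∃ᶠ n : ℕ in atTop, r ≤ ⨆ w : Fin n → Fin K, specRad (finWordProd S w) ^ (n⁻¹ : ℝ) := by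
  obtain ⟨N₀, hN₀⟩ := eventually_atTop.1 (eventually_le_rpow_inv one_half_pos hr0 hr)
  refine frequently_atTop.2 fun N => ?_
  obtain ⟨w, hw, z, hz, hle⟩ :=
    (attainsGrowthRate_jointSpectralRadius (toOperator d ∘ S)).exists_mem_spectrum (max N N₀)
  have hprod : finWordProd S w.get = (w.map S).prod := by rw [finWordProd_eq, List.ofFn_get]
  rw [prod_map_toOperator_comp, ← hprod] at hz
  rw [div_eq_inv_mul, ← one_div] at hle
  exact ⟨w.length, (le_max_left _ _).trans hw,
    (hN₀ _ ((le_max_right _ _).trans hw) _ (hle.trans (norm_le_specRad hz))).trans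
      (le_ciSup (f := fun v => specRad (finWordProd S v) ^ (w.length⁻¹ : ℝ))
        (Set.finite_range _).bddAbove w.get)⟩

theorem genSpecRad_eq_jointSpectralRadius :
    genSpecRad S = jointSpectralRadius (toOperator d ∘ S) := by
  let u (n : ℕ) : ℝ := ⨆ w : Fin n → Fin K, specRad (finWordProd S w) ^ (n⁻¹ : ℝ)
  have hu (n : ℕ) : 0 ≤ u n := Real.iSup_nonneg fun w => Real.rpow_nonneg (specRad_nonneg _) _
  have hbdd : atTop.IsBoundedUnder (· ≤ ·) u :=
    ⟨_, eventually_iSup_specRad_le S (lt_add_one _)⟩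
  have hcobdd : atTop.IsCoboundedUnder (· ≤ ·) u :=
    (isBoundedUnder_of ⟨0, hu⟩ : atTop.IsBoundedUnder (· ≥ ·) u).isCoboundedUnder_le
  refine le_antisymm ?_ (le_of_forall_lt_imp_le_of_dense fun r hr => ?_)
  · exact le_of_forall_gt_imp_ge_of_dense fun r hr =>
      limsup_le_of_le hcobdd (eventually_iSup_specRad_le S hr)
  · rcases lt_or_ge r 0 with hr0 | hr0
    · exact le_limsup_of_frequently_le (.of_forall fun n => hr0.le.trans (hu n)) hbdd
    · exact le_limsup_of_frequently_le (frequently_le_iSup_specRad S hr0 hr) hbdd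

end BergerWang

theorem tendsto_seminorm_wordProd_rpow_inv {S : Fin K → Matrix (Fin d) (Fin d) ℂ}
    {N : Seminorm ℂ (Matrix (Fin d) (Fin d) ℂ)} (hN : ∀ A, N A = 0 → A = 0) {i : ℕ → Fin K} {c : ℝ}
    (hc : 0 < c) (hi : ∀ n, c * jointSpectralRadius (toOperator d ∘ S) ^ n
      ≤ ‖((factor i 0 n).map (toOperator d ∘ S)).prod‖) :
    Tendsto (fun n : ℕ => N (wordProd S i n) ^ (n⁻¹ : ℝ)) atTop
      (𝓝 (jointSpectralRadius (toOperator d ∘ S))) := by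
  let N' : Seminorm ℂ (Matrix (Fin d) (Fin d) ℂ) :=
    (normSeminorm ℂ _).comp (toOperator d).toLinearMap
  have hN' : ∀ A, N' A = 0 → A = 0 := fun A hA =>
    (map_eq_zero_iff _ (toOperator d).injective).1 (norm_eq_zero.1 hA)
  have hprod (n : ℕ) : ‖((factor i 0 n).map (toOperator d ∘ S)).prod‖ = N' (wordProd S i n) := by
    rw [prod_map_toOperator_comp, wordProd_eq]
    rfl
  obtain ⟨a, ha, hNN'⟩ := exists_seminorm_le_mul_of_definite hN' N
  obtain ⟨b, hb, hN'N⟩ := exists_seminorm_le_mul_of_definite hN N'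
  refine tendsto_rpow_inv_of_growth (jointSpectralRadius_nonneg _) (fun n => apply_nonneg N _)
    (fun r hr => ?_) (div_pos hc hb) fun n => ?_
  · obtain ⟨C, hC⟩ := GrowthLE.of_jointSpectralRadius_lt hr
    refine ⟨a * C, fun n => (hNN' _).trans ?_⟩
    rw [← hprod, mul_assoc]
    gcongr
    simpa using hC (factor i 0 n)
  · rw [div_mul_eq_mul_div, div_le_iff₀' hb]
    exact (hi n).trans ((hprod n).trans_le (hN'N _))

end Matrices

section ExtremalMeasure

variable {K : ℕ}

theorem continuous_shift (K : ℕ) : Continuous (shift K) :=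
  continuous_pi fun n => continuous_apply (n + 1)

theorem factor_shift (i : ℕ → Fin K) (m n : ℕ) : factor (shift K i) m n = factor i (m + 1) n := by
  simp only [factor, shift, add_right_comm]

theorem AttainsGrowthRate.exists_ergodic {A : Type*} [NormedRing A] [NormedAlgebra ℂ A]
    {T : Fin K → A} {ρ : ℝ} (hT : AttainsGrowthRate T ρ) :
    ∃ μ : Measure (ℕ → Fin K), IsProbabilityMeasure μ ∧ Ergodic (shift K) μ ∧
      ∃ c > 0, ∀ᵐ i ∂μ, ∀ n, c * ρ ^ n ≤ ‖((factor i 0 n).map T).prod‖ := by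
  obtain ⟨c, hc, i₀, hi₀⟩ := hT.exists_sequence
  let X : Set (ℕ → Fin K) := {i | ∀ m n, c * ρ ^ n ≤ ‖((factor i m n).map T).prod‖}
  have hX : IsClosed X := by
    simp only [X, Set.ofPred_forall]
    exact isClosed_iInter fun m => isClosed_iInter fun n =>
      isClosed_setOf_factor (fun w => c * ρ ^ n ≤ ‖(w.map T).prod‖) m n
  have hshift : Set.MapsTo (shift K) X X := fun i hi m n => factor_shift i m n ▸ hi (m + 1) n
  obtain ⟨μ, hμ, herg, hμX⟩ :=
    exists_ergodic_of_isCompact_of_mapsTo (continuous_shift K) hX.isCompact ⟨i₀, hi₀⟩ hshift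
  exact ⟨μ, hμ, herg, c, hc, hμX.mono fun i hi => hi 0⟩

theorem exists_extremal_ergodic_measure_general {d K : ℕ} [NeZero d] [NeZero K]
    (S : Fin K → Matrix (Fin d) (Fin d) ℂ) (N : Seminorm ℂ (Matrix (Fin d) (Fin d) ℂ))
    (hN : ∀ A, N A = 0 → A = 0) :
    ∃ μ : Measure (ℕ → Fin K), IsProbabilityMeasure μ ∧ Ergodic (shift K) μ ∧
      IsExtremal S N μ := by
  obtain ⟨μ, hμ, herg, c, hc, hi⟩ :=
    (attainsGrowthRate_jointSpectralRadius (toOperator d ∘ S)).exists_ergodic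
  refine ⟨μ, hμ, herg, hi.mono fun i hi => ?_⟩
  rw [genSpecRad_eq_jointSpectralRadius]
  exact tendsto_seminorm_wordProd_rpow_inv hN hc hi

end ExtremalMeasure

/-- The norm `ν` as a bundled seminorm. -/
def MatrixNorm.toSeminorm {d : ℕ} (ν : MatrixNorm d) : Seminorm ℂ (Matrix (Fin d) (Fin d) ℂ) :=
  .of ν.N ν.triangle ν.homog

/-- There always exists an ergodic probability measure on `Σ_K^+` extremal for `S`. -/
theorem exists_extremal_ergodic_measure
    {d K : ℕ} (hd : 2 ≤ d) (hK : 2 ≤ K)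
    (S : Fin K → Matrix (Fin d) (Fin d) ℂ) (ν : MatrixNorm d) :
    ∃ μ : Measure (ℕ → Fin K), IsProbabilityMeasure μ ∧ Ergodic (shift K) μ ∧
      IsExtremal S ν.N μ :=
  have : NeZero d := ⟨by omega⟩
  have : NeZero K := ⟨by omega⟩
  exists_extremal_ergodic_measure_general S ν.toSeminorm fun A => (ν.definite A).1
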